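/- A vector v ∈ V₆ is stable for the action of G₆ = SL₂(L)×SL₂(L)×Lˣ×Lˣ if and only if Δ₆(v) ≠ 0 in L. -/

import Mathlib

/- The discriminant of the binary quartic A X⁴ + B X³Y + C X²Y² + D XY³ + E Y⁴. -/
def disc4 {R : Type*} [CommRing R] (A B C D E : R) : R :=
  B ^ 2 * C ^ 2 * D ^ 2 - 4 * B ^ 2 * C ^ 3 * E - 4 * B ^ 3 * D ^ 3 + 18 * B ^ 3 * C * D * E
       - 27 * B ^ 4 * E ^ 2 - 4 * A * C ^ 3 * D ^ 2 + 16 * A * C ^ 4 * E + 18 * A * B * C * D ^ 3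
       - 80 * A * B * C ^ 2 * D * E - 6 * A * B ^ 2 * D ^ 2 * E + 144 * A * B ^ 2 * C * E ^ 2 - 27 * A ^ 2 * D ^ 4
       + 144 * A ^ 2 * C * D ^ 2 * E - 128 * A ^ 2 * C ^ 2 * E ^ 2 - 192 * A ^ 2 * B * D * E ^ 2 + 256 * A ^ 3 * E ^ 3

/- The polynomials β₁, …, β₆ of the paper, as integer polynomials in the ten
coordinates a, b, d, e, g, h, j, k, o, r of V₆ (indices 0,…,9 in that order). -/
noncomputable def beta1 : MvPolynomial (Fin 10) ℤ :=
  4 * MvPolynomial.X 0 * MvPolynomial.X 2 * MvPolynomial.X 4 - MvPolynomial.X 4 * MvPolynomial.X 6 ^ 2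
noncomputable def beta2 : MvPolynomial (Fin 10) ℤ :=
  4 * MvPolynomial.X 1 * MvPolynomial.X 2 * MvPolynomial.X 4 + 4 * MvPolynomial.X 0 * MvPolynomial.X 3 * MvPolynomial.X 4 + 4 * MvPolynomial.X 0 * MvPolynomial.X 2 * MvPolynomial.X 5 - MvPolynomial.X 5 * MvPolynomial.X 6 ^ 2
    - 2 * MvPolynomial.X 4 * MvPolynomial.X 6 * MvPolynomial.X 7
noncomputable def beta3 : MvPolynomial (Fin 10) ℤ :=
  4 * MvPolynomial.X 1 * MvPolynomial.X 3 * MvPolynomial.X 4 + 4 * MvPolynomial.X 1 * MvPolynomial.X 2 * MvPolynomial.X 5 + 4 * MvPolynomial.X 0 * MvPolynomial.X 3 * MvPolynomial.X 5 - 2 * MvPolynomial.X 5 * MvPolynomial.X 6 * MvPolynomial.X 7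
    - MvPolynomial.X 4 * MvPolynomial.X 7 ^ 2
noncomputable def beta4 : MvPolynomial (Fin 10) ℤ :=
  4 * MvPolynomial.X 1 * MvPolynomial.X 3 * MvPolynomial.X 5 - MvPolynomial.X 5 * MvPolynomial.X 7 ^ 2
noncomputable def beta5 : MvPolynomial (Fin 10) ℤ :=
  -MvPolynomial.X 0 * MvPolynomial.X 9 ^ 2 - MvPolynomial.X 2 * MvPolynomial.X 8 ^ 2 + MvPolynomial.X 8 * MvPolynomial.X 6 * MvPolynomial.X 9
noncomputable def beta6 : MvPolynomial (Fin 10) ℤ :=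
  -MvPolynomial.X 1 * MvPolynomial.X 9 ^ 2 - MvPolynomial.X 3 * MvPolynomial.X 8 ^ 2 + MvPolynomial.X 8 * MvPolynomial.X 7 * MvPolynomial.X 9

/- Δ₆ = (1/16)·disc₄(F₁F₂): the integer polynomial Q with 16·Q = disc₄(F₁F₂)
(passed as the argument `Q`), interpreted in L via ℤ → L and evaluated at the
coordinates of v ∈ V₆. -/
noncomputable def Delta6 {L : Type*} [CommRing L]
    (Q : MvPolynomial (Fin 10) ℤ) (c : Fin 10 → L) : L :=
  MvPolynomial.aeval c Q

/- Zariski-closedness of a subset of affine n-space over L: it is the common zero locus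
of a set of polynomial functions (with respect to the fixed coordinates). -/
def IsZariskiClosed {n : ℕ} {L : Type*} [CommRing L] (s : Set (Fin n → L)) : Prop :=
  ∃ P : Set (MvPolynomial (Fin n) L), s = {x | ∀ p ∈ P, MvPolynomial.eval x p = 0}

/- Variables of the ambient polynomial ring of V₆: X, Y, Z are inl (inl 0), inl (inl 1),
inl (inr ()) and T, U, W are inr (inl 0), inr (inl 1), inr (inr ()). -/
abbrev Vars6 : Type := (Fin 2 ⊕ Unit) ⊕ (Fin 2 ⊕ Unit)

/- The element of V₆ with coordinates c = (a,b,d,e,g,h,j,k,o,r), recorded as the triple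
of its three components
((aX+bY)T² + (dX+eY)U² + (jX+kY)TU, (gX+hY)W², Z(oT+rU)W),
on which the torus part of G₆ acts by separate scalars. -/
noncomputable def toTriple6 {L : Type*} [CommRing L] (c : Fin 10 → L) :
    MvPolynomial Vars6 L × MvPolynomial Vars6 L × MvPolynomial Vars6 L :=
  ((MvPolynomial.C (c 0) * MvPolynomial.X (Sum.inl (Sum.inl 0)) + MvPolynomial.C (c 1) * MvPolynomial.X (Sum.inl (Sum.inl 1))) * MvPolynomial.X (Sum.inr (Sum.inl 0)) ^ 2
    + (MvPolynomial.C (c 2) * MvPolynomial.X (Sum.inl (Sum.inl 0)) + MvPolynomial.C (c 3) * MvPolynomial.X (Sum.inl (Sum.inl 1))) * MvPolynomial.X (Sum.inr (Sum.inl 1)) ^ 2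
    + (MvPolynomial.C (c 6) * MvPolynomial.X (Sum.inl (Sum.inl 0)) + MvPolynomial.C (c 7) * MvPolynomial.X (Sum.inl (Sum.inl 1))) * (MvPolynomial.X (Sum.inr (Sum.inl 0)) * MvPolynomial.X (Sum.inr (Sum.inl 1))),
   (MvPolynomial.C (c 4) * MvPolynomial.X (Sum.inl (Sum.inl 0)) + MvPolynomial.C (c 5) * MvPolynomial.X (Sum.inl (Sum.inl 1))) * MvPolynomial.X (Sum.inr (Sum.inr ())) ^ 2,
   MvPolynomial.X (Sum.inl (Sum.inr ())) * (MvPolynomial.C (c 8) * MvPolynomial.X (Sum.inr (Sum.inl 0)) + MvPolynomial.C (c 9) * MvPolynomial.X (Sum.inr (Sum.inl 1))) * MvPolynomial.X (Sum.inr (Sum.inr ())))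

/- Linear substitution in (X,Y) by M ∈ SL₂(L) fixing Z, and in (T,U) by N ∈ SL₂(L)
fixing W. -/
noncomputable def sub6 {L : Type*} [CommRing L]
    (M N : Matrix.SpecialLinearGroup (Fin 2) L)
    (v : MvPolynomial Vars6 L) : MvPolynomial Vars6 L :=
  MvPolynomial.aeval
    (Sum.elim
      (Sum.elim (fun i => ∑ j : Fin 2, MvPolynomial.C (M.1 i j) * MvPolynomial.X (Sum.inl (Sum.inl j)))
                (fun _ => MvPolynomial.X (Sum.inl (Sum.inr ()))))
      (Sum.elim (fun i => ∑ j : Fin 2, MvPolynomial.C (N.1 i j) * MvPolynomial.X (Sum.inr (Sum.inl j)))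
                (fun _ => MvPolynomial.X (Sum.inr (Sum.inr ()))))) v

/- The action of G₆ = SL₂(L) × SL₂(L) × Lˣ × Lˣ on V₆ (written on the triple of
components): (M, N, s, t) substitutes (X,Y) by M, (T,U) by N, and multiplies the first
component by s⁻¹, the second by s³t², and the third by t⁻¹. -/
noncomputable def act6 {L : Type*} [Field L]
    (g : Matrix.SpecialLinearGroup (Fin 2) L × Matrix.SpecialLinearGroup (Fin 2) L × Lˣ × Lˣ)
    (v : MvPolynomial Vars6 L × MvPolynomial Vars6 L × MvPolynomial Vars6 L) :
    MvPolynomial Vars6 L × MvPolynomial Vars6 L × MvPolynomial Vars6 L :=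
  (((g.2.2.1 : L))⁻¹ • sub6 g.1 g.2.1 v.1,
   ((g.2.2.1 : L) ^ 3 * (g.2.2.2 : L) ^ 2) • sub6 g.1 g.2.1 v.2.1,
   ((g.2.2.2 : L))⁻¹ • sub6 g.1 g.2.1 v.2.2)

/- Stability: the orbit of v (in the coordinate space of V₆ with respect to its monomial
basis) is Zariski-closed and the stabilizer of v in G₆ is finite. -/
def Stable6 {L : Type*} [Field L] (c : Fin 10 → L) : Prop :=
  IsZariskiClosed {c' : Fin 10 → L |
    ∃ g : Matrix.SpecialLinearGroup (Fin 2) L × Matrix.SpecialLinearGroup (Fin 2) L × Lˣ × Lˣ,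
      toTriple6 c' = act6 g (toTriple6 c)} ∧
  {g : Matrix.SpecialLinearGroup (Fin 2) L × Matrix.SpecialLinearGroup (Fin 2) L × Lˣ × Lˣ |
      act6 g (toTriple6 c) = toTriple6 c}.Finite

section Coordinates

variable {R S : Type*} [CommRing R] [CommRing S]

/-- The first coefficient of `D = D₀ X² + 2 D₁ XY + D₂ Y²`, the negated discriminant
in `T, U` of the pencil `X q₁ + Y q₂`. -/
def pencilDisc0 (c : Fin 10 → R) : R := 4 * c 0 * c 2 - c 6 ^ 2

/-- Half of the middle coefficient of `D`. -/
def pencilDisc1 (c : Fin 10 → R) : R := 2 * (c 0 * c 3 + c 1 * c 2) - c 6 * c 7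

/-- The last coefficient of `D`. -/
def pencilDisc2 (c : Fin 10 → R) : R := 4 * c 1 * c 3 - c 7 ^ 2

/-- The resultant of the two binary quadratic forms `q₁, q₂` in `T, U`. -/
def pencilRes (c : Fin 10 → R) : R :=
  (c 0 * c 3 - c 1 * c 2) ^ 2 - (c 0 * c 3 + c 1 * c 2) * c 6 * c 7
    + c 0 * c 2 * c 7 ^ 2 + c 1 * c 3 * c 6 ^ 2

/-- The `X`-coefficient of `F₂`. -/
def valueX (c : Fin 10 → R) : R := -c 0 * c 9 ^ 2 - c 2 * c 8 ^ 2 + c 8 * c 6 * c 9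

/-- The `Y`-coefficient of `F₂`. -/
def valueY (c : Fin 10 → R) : R := -c 1 * c 9 ^ 2 - c 3 * c 8 ^ 2 + c 8 * c 7 * c 9

/-- The resultant of `gX + hY` and `F₂`. -/
def linRes (c : Fin 10 → R) : R := c 5 * valueX c - c 4 * valueY c

/-- The value of `D` at the root of `gX + hY`. -/
def discAtLin (c : Fin 10 → R) : R :=
  pencilDisc0 c * c 5 ^ 2 - 2 * pencilDisc1 c * c 5 * c 4 + pencilDisc2 c * c 4 ^ 2

/-- The value of `D` at the root of `F₂`. -/
def discAtValue (c : Fin 10 → R) : R :=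
  pencilDisc0 c * valueY c ^ 2 - 2 * pencilDisc1 c * valueY c * valueX c
    + pencilDisc2 c * valueX c ^ 2

/-- The polarisation of `D` at the roots of `gX + hY` and `F₂`; an invariant of degree 6. -/
def polarInv (c : Fin 10 → R) : R :=
  pencilDisc0 c * c 5 * valueY c - pencilDisc1 c * (c 5 * valueX c + c 4 * valueY c)
    + pencilDisc2 c * c 4 * valueX c

/-- The invariant of degree 12. -/
def resInv (c : Fin 10 → R) : R := pencilRes c * linRes c ^ 2

lemma four_mul_pencilRes (c : Fin 10 → R) :
    4 * pencilRes c = pencilDisc1 c ^ 2 - pencilDisc0 c * pencilDisc2 c := by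
  simp only [pencilRes, pencilDisc0, pencilDisc1, pencilDisc2]; ring

lemma discAtLin_mul_discAtValue (c : Fin 10 → R) :
    discAtLin c * discAtValue c = polarInv c ^ 2 - 4 * resInv c := by
  rw [resInv, ← mul_assoc, four_mul_pencilRes]
  simp only [discAtLin, discAtValue, polarInv, linRes]; ring

lemma map_resInv (f : R →+* S) (c : Fin 10 → R) : f (resInv c) = resInv (fun i => f (c i)) := by
  simp [resInv, pencilRes, linRes, valueX, valueY]

lemma map_polarInv (f : R →+* S) (c : Fin 10 → R) :
    f (polarInv c) = polarInv (fun i => f (c i)) := by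
  simp [polarInv, pencilDisc0, pencilDisc1, pencilDisc2, valueX, valueY, map_ofNat]

/-- The discriminant of a product of a binary quadratic form and two linear forms. -/
lemma disc4_mul_mul (D₀ D₁ D₂ g h u v : R) :
    disc4 (D₀ * g * u) (D₀ * g * v + (D₀ * h + 2 * D₁ * g) * u)
      ((D₀ * h + 2 * D₁ * g) * v + (2 * D₁ * h + D₂ * g) * u)
      ((2 * D₁ * h + D₂ * g) * v + D₂ * h * u) (D₂ * h * v)
      = 4 * (D₁ ^ 2 - D₀ * D₂) * (h * u - g * v) ^ 2
        * (D₀ * h ^ 2 - 2 * D₁ * h * g + D₂ * g ^ 2) ^ 2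
        * (D₀ * v ^ 2 - 2 * D₁ * v * u + D₂ * u ^ 2) ^ 2 := by
  simp only [disc4]; ring

lemma eq_of_sixteen_mul_eq_disc4 (Q : MvPolynomial (Fin 10) ℤ)
    (hQ : 16 * Q =
      disc4 (beta1 * beta5) (beta1 * beta6 + beta2 * beta5) (beta2 * beta6 + beta3 * beta5)
        (beta3 * beta6 + beta4 * beta5) (beta4 * beta6)) :
    Q = resInv MvPolynomial.X * (polarInv MvPolynomial.X ^ 2 - 4 * resInv MvPolynomial.X) ^ 2 := by
  have h := disc4_mul_mul (pencilDisc0 (R := MvPolynomial (Fin 10) ℤ) MvPolynomial.X)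
    (pencilDisc1 MvPolynomial.X) (pencilDisc2 MvPolynomial.X) (MvPolynomial.X 4)
    (MvPolynomial.X 5) (valueX MvPolynomial.X) (valueY MvPolynomial.X)
  have h1 : beta1 = pencilDisc0 MvPolynomial.X * MvPolynomial.X 4 := by
    simp only [beta1, pencilDisc0]; ring
  have h2 : beta2 = pencilDisc0 MvPolynomial.X * MvPolynomial.X 5
      + 2 * pencilDisc1 MvPolynomial.X * MvPolynomial.X 4 := by
    simp only [beta2, pencilDisc0, pencilDisc1]; ring
  have h3 : beta3 = 2 * pencilDisc1 MvPolynomial.X * MvPolynomial.X 5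
      + pencilDisc2 MvPolynomial.X * MvPolynomial.X 4 := by
    simp only [beta3, pencilDisc2, pencilDisc1]; ring
  have h4 : beta4 = pencilDisc2 MvPolynomial.X * MvPolynomial.X 5 := by
    simp only [beta4, pencilDisc2]; ring
  have h5 : beta5 = valueX MvPolynomial.X := rfl
  have h6 : beta6 = valueY MvPolynomial.X := rfl
  rw [← h1, ← h2, ← h3, ← h4, ← h5, ← h6, ← hQ, ← four_mul_pencilRes, h5, h6] at h
  rw [← discAtLin_mul_discAtValue]
  have h16 : (16 : MvPolynomial (Fin 10) ℤ) ≠ 0 := by norm_num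
  apply mul_left_cancel₀ h16
  rw [h]
  simp only [discAtLin, discAtValue, resInv, linRes]; ring

end Coordinates

section Action

variable {L : Type*} [Field L]

/-- The group `G₆`. -/
abbrev G6 (L : Type*) [Field L] : Type _ :=
  Matrix.SpecialLinearGroup (Fin 2) L × Matrix.SpecialLinearGroup (Fin 2) L × Lˣ × Lˣ

/-- Coordinates `(T², U², TU)` of a binary quadratic form after the substitution `N`. -/
def quadSub (N : Matrix.SpecialLinearGroup (Fin 2) L) (a d j : L) : Fin 3 → L :=
  ![a * N.1 0 0 ^ 2 + j * (N.1 0 0 * N.1 1 0) + d * N.1 1 0 ^ 2,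
    a * N.1 0 1 ^ 2 + j * (N.1 0 1 * N.1 1 1) + d * N.1 1 1 ^ 2,
    2 * a * (N.1 0 0 * N.1 0 1) + j * (N.1 0 0 * N.1 1 1 + N.1 0 1 * N.1 1 0)
      + 2 * d * (N.1 1 0 * N.1 1 1)]

/-- The action of `G₆` in coordinates. -/
def coordAct (g : G6 L) (c : Fin 10 → L) : Fin 10 → L :=
  let q₁ := quadSub g.2.1 (c 0) (c 2) (c 6)
  let q₂ := quadSub g.2.1 (c 1) (c 3) (c 7)
  let α : L := (g.2.2.1 : L)⁻¹
  let δ : L := (g.2.2.1 : L) ^ 3 * (g.2.2.2 : L) ^ 2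
  let γ : L := (g.2.2.2 : L)⁻¹
  ![α * (g.1.1 0 0 * q₁ 0 + g.1.1 1 0 * q₂ 0), α * (g.1.1 0 1 * q₁ 0 + g.1.1 1 1 * q₂ 0),
    α * (g.1.1 0 0 * q₁ 1 + g.1.1 1 0 * q₂ 1), α * (g.1.1 0 1 * q₁ 1 + g.1.1 1 1 * q₂ 1),
    δ * (g.1.1 0 0 * c 4 + g.1.1 1 0 * c 5), δ * (g.1.1 0 1 * c 4 + g.1.1 1 1 * c 5),
    α * (g.1.1 0 0 * q₁ 2 + g.1.1 1 0 * q₂ 2), α * (g.1.1 0 1 * q₁ 2 + g.1.1 1 1 * q₂ 2),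
    γ * (g.2.1.1 0 0 * c 8 + g.2.1.1 1 0 * c 9), γ * (g.2.1.1 0 1 * c 8 + g.2.1.1 1 1 * c 9)]

lemma act6_toTriple6 (g : G6 L) (c : Fin 10 → L) :
    act6 g (toTriple6 c) = toTriple6 (coordAct g c) := by
  simp only [act6, toTriple6, Prod.mk.injEq, sub6, map_add, map_mul, map_pow,
    MvPolynomial.aeval_X, Sum.elim_inl, Sum.elim_inr, Fin.sum_univ_two, MvPolynomial.smul_eq_C_mul,
    coordAct, quadSub, ← MvPolynomial.algebraMap_eq, AlgHom.commutes]
  simp only [MvPolynomial.algebraMap_eq]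
  simp only [Matrix.cons_val, map_add, map_mul, map_pow, map_ofNat]
  refine ⟨?_, ?_, ?_⟩ <;> ring

lemma toTriple6_injective : Function.Injective (toTriple6 (L := L)) := by
  intro c c' h
  simp only [toTriple6, Prod.mk.injEq] at h
  obtain ⟨h1, h2, h3⟩ := h
  have e1 (x y t u : L) := congrArg (MvPolynomial.eval
    (Sum.elim (Sum.elim ![x, y] fun _ => 1) (Sum.elim ![t, u] fun _ => 1) : Vars6 → L)) h1
  have e2 (x y t u : L) := congrArg (MvPolynomial.eval
    (Sum.elim (Sum.elim ![x, y] fun _ => 1) (Sum.elim ![t, u] fun _ => 1) : Vars6 → L)) h2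
  have e3 (x y t u : L) := congrArg (MvPolynomial.eval
    (Sum.elim (Sum.elim ![x, y] fun _ => 1) (Sum.elim ![t, u] fun _ => 1) : Vars6 → L)) h3
  simp only [map_add, map_mul, map_pow, MvPolynomial.eval_X, MvPolynomial.eval_C,
    Sum.elim_inl, Sum.elim_inr, Matrix.cons_val] at e1 e2 e3
  have a := e1 1 0 1 0
  have b := e1 0 1 1 0
  have d := e1 1 0 0 1
  have e := e1 0 1 0 1
  funext i
  fin_cases i <;> simp only [Fin.reduceFinMk, Fin.zero_eta, Fin.mk_one]
  · linear_combination a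
  · linear_combination b
  · linear_combination d
  · linear_combination e
  · linear_combination e2 1 0 0 0
  · linear_combination e2 0 1 0 0
  · linear_combination e1 1 0 1 1 - a - d
  · linear_combination e1 0 1 1 1 - b - e
  · linear_combination e3 0 0 1 0
  · linear_combination e3 0 0 0 1

lemma coordAct_one (c : Fin 10 → L) : coordAct 1 c = c := by
  funext i
  fin_cases i <;> simp [coordAct, quadSub]

set_option maxHeartbeats 1000000 in
-- ten coordinates, each a polynomial identity in the matrix entries
lemma coordAct_coordAct (g h : G6 L) (c : Fin 10 → L) :
    coordAct h (coordAct g c) = coordAct (g * h) c := by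
  funext i
  fin_cases i <;>
    simp only [coordAct, quadSub, Matrix.mul_apply, Fin.sum_univ_two, Matrix.cons_val,
      Fin.reduceFinMk, Fin.zero_eta, Fin.mk_one, Prod.fst_mul, Prod.snd_mul, Units.val_mul,
      mul_inv, Matrix.SpecialLinearGroup.coe_mul] <;> ring

lemma stable6_iff (c : Fin 10 → L) :
    Stable6 c ↔ IsZariskiClosed {c' | ∃ g : G6 L, c' = coordAct g c} ∧
      {g : G6 L | coordAct g c = c}.Finite := by
  simp only [Stable6, act6_toTriple6, toTriple6_injective.eq_iff]

lemma coordAct_inv_coordAct (g : G6 L) (c : Fin 10 → L) : coordAct g⁻¹ (coordAct g c) = c := by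
  rw [coordAct_coordAct, mul_inv_cancel, coordAct_one]

lemma finite_stabilizer_coordAct {g : G6 L} {c : Fin 10 → L}
    (h : {k : G6 L | coordAct k c = c}.Finite) :
    {k : G6 L | coordAct k (coordAct g c) = coordAct g c}.Finite := by
  refine (h.image fun k => g⁻¹ * k * g).subset fun k hk => ⟨g * k * g⁻¹, ?_, by group⟩
  simp only [Set.mem_ofPred_eq] at hk ⊢
  rw [← coordAct_coordAct, ← coordAct_coordAct, hk, coordAct_inv_coordAct]

lemma Stable6.act {c : Fin 10 → L} (h : Stable6 c) (g : G6 L) : Stable6 (coordAct g c) := by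
  rw [stable6_iff] at h ⊢
  refine ⟨?_, finite_stabilizer_coordAct h.2⟩
  convert h.1 using 1
  ext c'
  constructor
  · rintro ⟨k, rfl⟩
    exact ⟨g * k, coordAct_coordAct ..⟩
  · rintro ⟨k, rfl⟩
    exact ⟨g⁻¹ * k, by rw [coordAct_coordAct, mul_inv_cancel_left]⟩

end Action

section Invariance

variable {L : Type*} [Field L] (g : G6 L) (c : Fin 10 → L)

lemma det_eq_one (M : Matrix.SpecialLinearGroup (Fin 2) L) :
    M.1 0 0 * M.1 1 1 - M.1 0 1 * M.1 1 0 = 1 := by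
  rw [← Matrix.det_fin_two]; exact M.2

lemma eq_of_eq_mul_det_pow {x y : L} (M : Matrix.SpecialLinearGroup (Fin 2) L) (n : ℕ)
    (h : x = y * (M.1 0 0 * M.1 1 1 - M.1 0 1 * M.1 1 0) ^ n) : x = y := by
  rwa [det_eq_one, one_pow, mul_one] at h

lemma valueX_coordAct : valueX (coordAct g c) = (g.2.2.1 : L)⁻¹ * ((g.2.2.2 : L)⁻¹) ^ 2 *
    (g.1.1 0 0 * valueX c + g.1.1 1 0 * valueY c) := by
  apply eq_of_eq_mul_det_pow g.2.1 2
  simp only [valueX, valueY, coordAct, quadSub, Matrix.cons_val]; ring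

lemma valueY_coordAct : valueY (coordAct g c) = (g.2.2.1 : L)⁻¹ * ((g.2.2.2 : L)⁻¹) ^ 2 *
    (g.1.1 0 1 * valueX c + g.1.1 1 1 * valueY c) := by
  apply eq_of_eq_mul_det_pow g.2.1 2
  simp only [valueX, valueY, coordAct, quadSub, Matrix.cons_val]; ring

lemma pencilDisc0_coordAct : pencilDisc0 (coordAct g c) = ((g.2.2.1 : L)⁻¹) ^ 2 *
    (g.1.1 0 0 ^ 2 * pencilDisc0 c + 2 * g.1.1 0 0 * g.1.1 1 0 * pencilDisc1 c
      + g.1.1 1 0 ^ 2 * pencilDisc2 c) := by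
  apply eq_of_eq_mul_det_pow g.2.1 2
  simp only [pencilDisc0, pencilDisc1, pencilDisc2, coordAct, quadSub, Matrix.cons_val]; ring

lemma pencilDisc1_coordAct : pencilDisc1 (coordAct g c) = ((g.2.2.1 : L)⁻¹) ^ 2 *
    (g.1.1 0 0 * g.1.1 0 1 * pencilDisc0 c
      + (g.1.1 0 0 * g.1.1 1 1 + g.1.1 0 1 * g.1.1 1 0) * pencilDisc1 c
      + g.1.1 1 0 * g.1.1 1 1 * pencilDisc2 c) := by
  apply eq_of_eq_mul_det_pow g.2.1 2
  simp only [pencilDisc0, pencilDisc1, pencilDisc2, coordAct, quadSub, Matrix.cons_val]; ring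

lemma pencilDisc2_coordAct : pencilDisc2 (coordAct g c) = ((g.2.2.1 : L)⁻¹) ^ 2 *
    (g.1.1 0 1 ^ 2 * pencilDisc0 c + 2 * g.1.1 0 1 * g.1.1 1 1 * pencilDisc1 c
      + g.1.1 1 1 ^ 2 * pencilDisc2 c) := by
  apply eq_of_eq_mul_det_pow g.2.1 2
  simp only [pencilDisc0, pencilDisc1, pencilDisc2, coordAct, quadSub, Matrix.cons_val]; ring

lemma coordAct_four : coordAct g c 4 = (g.2.2.1 : L) ^ 3 * (g.2.2.2 : L) ^ 2 *
    (g.1.1 0 0 * c 4 + g.1.1 1 0 * c 5) := rfl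

lemma coordAct_five : coordAct g c 5 = (g.2.2.1 : L) ^ 3 * (g.2.2.2 : L) ^ 2 *
    (g.1.1 0 1 * c 4 + g.1.1 1 1 * c 5) := rfl

lemma pencilRes_coordAct : pencilRes (coordAct g c) = ((g.2.2.1 : L)⁻¹) ^ 4 * pencilRes c := by
  trans ((g.2.2.1 : L)⁻¹) ^ 4 * pencilRes c * ((g.1.1 0 0 * g.1.1 1 1 - g.1.1 0 1 * g.1.1 1 0) ^ 2
    * (g.2.1.1 0 0 * g.2.1.1 1 1 - g.2.1.1 0 1 * g.2.1.1 1 0) ^ 4)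
  · simp only [pencilRes, coordAct, quadSub, Matrix.cons_val]; ring
  · simp only [det_eq_one]; ring

lemma linRes_coordAct : linRes (coordAct g c) = (g.2.2.1 : L) ^ 2 * linRes c := by
  trans (g.2.2.1 : L) ^ 2 * linRes c * (g.1.1 0 0 * g.1.1 1 1 - g.1.1 0 1 * g.1.1 1 0)
  · simp only [linRes, valueX_coordAct, valueY_coordAct, coordAct_four, coordAct_five]
    field_simp; ring
  · simp only [det_eq_one]; ring

lemma discAtLin_coordAct : discAtLin (coordAct g c) =
    ((g.2.2.1 : L) * (g.2.2.2 : L)) ^ 4 * discAtLin c := by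
  trans ((g.2.2.1 : L) * (g.2.2.2 : L)) ^ 4 * discAtLin c *
    (g.1.1 0 0 * g.1.1 1 1 - g.1.1 0 1 * g.1.1 1 0) ^ 2
  · simp only [discAtLin, pencilDisc0_coordAct, pencilDisc1_coordAct, pencilDisc2_coordAct,
      coordAct_four, coordAct_five]
    field_simp; ring
  · simp only [det_eq_one]; ring

lemma discAtValue_coordAct : discAtValue (coordAct g c) =
    ((g.2.2.1 : L)⁻¹ * (g.2.2.2 : L)⁻¹) ^ 4 * discAtValue c := by
  trans ((g.2.2.1 : L)⁻¹ * (g.2.2.2 : L)⁻¹) ^ 4 * discAtValue c *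
    (g.1.1 0 0 * g.1.1 1 1 - g.1.1 0 1 * g.1.1 1 0) ^ 2
  · simp only [discAtValue, pencilDisc0_coordAct, pencilDisc1_coordAct, pencilDisc2_coordAct,
      valueX_coordAct, valueY_coordAct]
    ring
  · simp only [det_eq_one]; ring

lemma polarInv_coordAct : polarInv (coordAct g c) = polarInv c := by
  trans polarInv c * (g.1.1 0 0 * g.1.1 1 1 - g.1.1 0 1 * g.1.1 1 0) ^ 2
  · simp only [polarInv, pencilDisc0_coordAct, pencilDisc1_coordAct, pencilDisc2_coordAct,
      valueX_coordAct, valueY_coordAct, coordAct_four, coordAct_five]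
    field_simp; ring
  · simp only [det_eq_one]; ring

lemma resInv_coordAct : resInv (coordAct g c) = resInv c := by
  simp only [resInv, pencilRes_coordAct, linRes_coordAct]
  field_simp

end Invariance

section OneParameter

variable {L : Type*} [Field L]

lemma IsZariskiClosed.limit_mem [Infinite L] {n : ℕ} {s : Set (Fin n → L)}
    (hs : IsZariskiClosed s) (w : Fin n → ℤ) (c : Fin n → L) (hw : ∀ i, w i < 0 → c i = 0)
    (h : ∀ z : Lˣ, (fun i => ((z ^ w i : Lˣ) : L) * c i) ∈ s) :
    (fun i => if w i = 0 then c i else 0) ∈ s := by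
  obtain ⟨P, rfl⟩ := hs
  intro p hp
  set f : Polynomial L := MvPolynomial.aeval
    (fun i => Polynomial.C (c i) * Polynomial.X ^ (w i).toNat) p with hf
  have heval (z : L) : f.eval z = MvPolynomial.eval (fun i => c i * z ^ (w i).toNat) p := by
    rw [hf, ← Polynomial.coe_evalRingHom, MvPolynomial.aeval_def, MvPolynomial.hom_eval₂,
      MvPolynomial.eval, MvPolynomial.eval₂Hom]
    simp only [RingHom.coe_mk, MonoidHom.coe_mk, OneHom.coe_mk]
    congr 1
    · ext; simp
    · funext i; simp
  have hzero : Polynomial.X * f = 0 := by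
    apply Polynomial.funext
    intro z
    rcases eq_or_ne z 0 with rfl | hz
    · simp
    · rw [Polynomial.eval_mul, heval, Polynomial.eval_zero, mul_eq_zero]
      right
      rw [← h (Units.mk0 z hz) p hp]
      congr 2
      funext i
      rcases lt_or_ge (w i) 0 with hi | hi
      · simp [hw i hi]
      · rw [mul_comm, Units.val_zpow_eq_zpow_val, Units.val_mk0]
        congr 1
        conv_rhs => rw [← Int.toNat_of_nonneg hi, zpow_natCast]
  have hf0 : f = 0 := (mul_eq_zero.mp hzero).resolve_left Polynomial.X_ne_zero
  have h0 := heval 0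
  rw [hf0, Polynomial.eval_zero] at h0
  refine Eq.trans ?_ h0.symm
  congr 2
  funext i
  rcases lt_trichotomy (w i) 0 with hi | hi | hi
  · simp [hw i hi]
  · simp [hi]
  · have : (w i).toNat ≠ 0 := by omega
    simp [hi.ne', this]

/-- The diagonal matrix `diag(u, u⁻¹)`. -/
def diagSL (u : Lˣ) : Matrix.SpecialLinearGroup (Fin 2) L :=
  ⟨!![(u : L), 0; 0, (u : L)⁻¹], by simp [Matrix.det_fin_two]⟩

/-- The one-parameter subgroup of the maximal torus with exponents `x, y, σ, τ`. -/
def oneParam (x y σ τ : ℤ) (z : Lˣ) : G6 L :=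
  (diagSL (z ^ x), diagSL (z ^ y), z ^ σ, z ^ τ)

/-- The weights of a one-parameter subgroup on the coordinates. -/
def weight6 (x y σ τ : ℤ) : Fin 10 → ℤ :=
  ![x + 2 * y - σ, -x + 2 * y - σ, x - 2 * y - σ, -x - 2 * y - σ, x + 3 * σ + 2 * τ,
    -x + 3 * σ + 2 * τ, x - σ, -x - σ, y - τ, -y - τ]

lemma coordAct_oneParam (x y σ τ : ℤ) (z : Lˣ) (c : Fin 10 → L) :
    coordAct (oneParam x y σ τ z) c =
      fun i => ((z ^ weight6 x y σ τ i : Lˣ) : L) * c i := by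
  have hz : (z : L) ≠ 0 := z.ne_zero
  funext i
  fin_cases i <;>
    simp [coordAct, quadSub, oneParam, diagSL, weight6, zpow_add₀ hz, zpow_sub₀ hz, zpow_mul,
      zpow_neg, mul_comm (2 : ℤ), mul_comm (3 : ℤ)] <;> field_simp

lemma Stable6.false_of_weight6 [IsAlgClosed L] {c : Fin 10 → L} (h : Stable6 c) (x y σ τ : ℤ)
    (hτ : τ = 1 ∨ τ = -1) (hw : ∀ i, weight6 x y σ τ i < 0 → c i = 0) : False := by
  have : Infinite L := IsAlgClosed.instInfinite
  have h' := (stable6_iff c).mp h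
  obtain ⟨g, hg⟩ := h'.1.limit_mem (weight6 x y σ τ) c hw
    fun z => ⟨oneParam x y σ τ z, (coordAct_oneParam ..).symm⟩
  have hfin := ((stable6_iff _).mp (h.act g)).2
  rw [← hg] at hfin
  have hinj : Function.Injective (oneParam (L := L) x y σ τ) := by
    intro z z' hz
    have := congrArg (fun k : G6 L => k.2.2.2) hz
    rcases hτ with rfl | rfl <;> simpa [oneParam] using this
  have : Infinite Lˣ := (unitsEquivNeZero (G₀ := L)).infinite_iff.mpr
    (Set.infinite_coe_iff.mpr (Set.finite_singleton (0 : L)).infinite_compl)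
  refine Set.infinite_of_injective_forall_mem hinj (fun z => ?_) hfin
  simp only [Set.mem_ofPred_eq, coordAct_oneParam]
  funext i
  split_ifs with hi <;> simp [hi]

end OneParameter

section SpecialLinear

variable {L : Type*} [Field L]

lemma exists_sl_col_zero {p q : L} (h : p ≠ 0 ∨ q ≠ 0) :
    ∃ M : Matrix.SpecialLinearGroup (Fin 2) L, M.1 0 0 = p ∧ M.1 1 0 = q := by
  rcases h with h | h
  · exact ⟨⟨!![p, 0; q, p⁻¹], by simp [Matrix.det_fin_two, h]⟩, by simp, by simp⟩
  · exact ⟨⟨!![p, -q⁻¹; q, 0], by simp [Matrix.det_fin_two, h]⟩, by simp, by simp⟩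

lemma exists_sl_mul_col_zero (u v : L) :
    ∃ M : Matrix.SpecialLinearGroup (Fin 2) L, M.1 0 0 * u + M.1 1 0 * v = 0 := by
  by_cases h : v ≠ 0 ∨ -u ≠ 0
  · obtain ⟨M, h0, h1⟩ := exists_sl_col_zero h
    exact ⟨M, by rw [h0, h1]; ring⟩
  · push Not at h
    exact ⟨1, by simp [h.1, neg_eq_zero.mp h.2]⟩

lemma exists_sl_mul_col_one (u v : L) :
    ∃ M : Matrix.SpecialLinearGroup (Fin 2) L, M.1 0 1 * u + M.1 1 1 * v = 0 := by
  obtain ⟨M, hM⟩ := exists_sl_mul_col_zero u v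
  refine ⟨⟨!![-M.1 0 1, M.1 0 0; -M.1 1 1, M.1 1 0], ?_⟩, by simpa using hM⟩
  rw [Matrix.det_fin_two_of]
  linear_combination det_eq_one M

lemma exists_sl_root [IsAlgClosed L] (a j d : L) : ∃ N : Matrix.SpecialLinearGroup (Fin 2) L,
    a * N.1 0 0 ^ 2 + j * (N.1 0 0 * N.1 1 0) + d * N.1 1 0 ^ 2 = 0 := by
  by_cases ha : a = 0
  · exact ⟨1, by simp [ha]⟩
  · obtain ⟨x, hx⟩ := IsAlgClosed.exists_root
      (Polynomial.C a * Polynomial.X ^ 2 + Polynomial.C j * Polynomial.X + Polynomial.C d)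
      (by rw [Polynomial.degree_quadratic ha]; decide)
    obtain ⟨N, h0, h1⟩ := exists_sl_col_zero (p := x) (q := 1) (Or.inr one_ne_zero)
    refine ⟨N, ?_⟩
    rw [h0, h1]
    simpa using hx

end SpecialLinear

section NormalForm

variable {L : Type*} [Field L]

/-- The representative of the orbit with invariants `E` (degree 6) and `I` (degree 12). -/
def normalForm6 (E I : L) : Fin 10 → L := ![1, 0, I, 0, 0, 1, -E, 1, 0, 1]

/-- `c` lies in the orbit of the normal form with the same invariants. -/
def HasNormalForm (c : Fin 10 → L) : Prop :=
  ∃ g : G6 L, coordAct g c = normalForm6 (polarInv c) (resInv c)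

lemma HasNormalForm.of_coordAct {c : Fin 10 → L} (g : G6 L)
    (h : HasNormalForm (coordAct g c)) : HasNormalForm c := by
  obtain ⟨k, hk⟩ := h
  rw [coordAct_coordAct, polarInv_coordAct, resInv_coordAct] at hk
  exact ⟨_, hk⟩

/-- The upper unipotent matrix with entry `u`. -/
def unipSL (u : L) : Matrix.SpecialLinearGroup (Fin 2) L :=
  ⟨!![1, u; 0, 1], by simp [Matrix.det_fin_two]⟩

lemma finite_stabilizer_normalForm6 (E I : L) :
    {g : G6 L | coordAct g (normalForm6 E I) = normalForm6 E I}.Finite := by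
  refine Set.Finite.subset (Set.toFinite (({1, -1} : Set (Matrix.SpecialLinearGroup (Fin 2) L)) ×ˢ
    ({1, -1} : Set (Matrix.SpecialLinearGroup (Fin 2) L)) ×ˢ
    ({1, -1} : Set Lˣ) ×ˢ ({1, -1} : Set Lˣ))) ?_
  rintro ⟨M, N, s, t⟩ hg
  have hM := det_eq_one M
  have hN := det_eq_one N
  have hs := s.ne_zero
  have ht := t.ne_zero
  have e (i) := congrFun hg i
  have e0 := e 0
  have e1 := e 1
  have e3 := e 3
  have e4 := e 4
  have e5 := e 5
  have e7 := e 7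
  have e8 := e 8
  have e9 := e 9
  clear e hg
  simp [coordAct, normalForm6, quadSub] at e0 e1 e3 e4 e5 e7 e8 e9
  simp only [e4, mul_zero, sub_zero] at hM
  simp only [e8, mul_zero, sub_zero] at hN
  have hN0 : N.1 0 0 ≠ 0 := left_ne_zero_of_mul_eq_one hN
  have hN1 : N.1 1 1 ≠ 0 := right_ne_zero_of_mul_eq_one hN
  have hM1 : M.1 1 1 ≠ 0 := right_ne_zero_of_mul_eq_one hM
  simp [hN0, e8] at e1
  simp [e1, hN1, hM1] at e3
  simp only [e4, e8] at e0
  simp only [e1, e3] at e7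
  have hsM : (s : L) = M.1 1 1 := by
    field_simp at e7
    linear_combination M.1 1 1 * hN - e7
  have htN : (t : L) = N.1 1 1 := by
    field_simp at e9
    exact e9.symm
  have hNM : N.1 0 0 ^ 2 = M.1 1 1 ^ 2 := by
    field_simp at e0
    linear_combination M.1 1 1 * e0 + M.1 1 1 * hsM - N.1 0 0 ^ 2 * hM
  have hM2 : M.1 1 1 ^ 2 = 1 := by
    rw [hsM, htN] at e5
    linear_combination e5 + M.1 1 1 ^ 2 * N.1 1 1 ^ 2 * hNM
      - M.1 1 1 ^ 2 * (N.1 0 0 * N.1 1 1 + 1) * hN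
  have hN2 : N.1 1 1 ^ 2 = 1 := by
    linear_combination (N.1 0 0 * N.1 1 1 + 1) * hN - N.1 1 1 ^ 2 * (hNM + hM2)
  have hsl (K : Matrix.SpecialLinearGroup (Fin 2) L) (h01 : K.1 0 1 = 0) (h10 : K.1 1 0 = 0)
      (hK : K.1 1 1 ^ 2 = 1) : K = 1 ∨ K = -1 := by
    have hd := det_eq_one K
    rw [h01, zero_mul, sub_zero] at hd
    rcases sq_eq_sq_iff_eq_or_eq_neg.mp (hK.trans (one_pow 2).symm) with h | h
    · left
      ext i j
      fin_cases i <;> fin_cases j <;> simp_all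
    · right
      ext i j
      fin_cases i <;> fin_cases j <;> simp_all
      linear_combination -hd
  have hu (u : Lˣ) (h : (u : L) ^ 2 = 1) : u = 1 ∨ u = -1 := by
    rcases sq_eq_sq_iff_eq_or_eq_neg.mp (h.trans (one_pow 2).symm) with h | h
    · exact Or.inl (Units.ext h)
    · exact Or.inr (Units.ext h)
  exact ⟨hsl M e1 e4 hM2, hsl N e3 e8 hN2, hu s (by rw [hsM, hM2]), hu t (by rw [htN, hN2])⟩

variable [IsAlgClosed L] {c : Fin 10 → L}

lemma hasNormalForm_of_monomial (hI : resInv c ≠ 0) (h4 : c 4 = 0) (h8 : c 8 = 0)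
    (h1 : c 1 = 0) (h3 : c 3 = 0) : HasNormalForm c := by
  have hIc : resInv c = (c 0 * c 2 * c 7 ^ 2) * (c 5 * (c 0 * c 9 ^ 2)) ^ 2 := by
    simp only [resInv, pencilRes, linRes, valueX, valueY, h4, h8, h1, h3]; ring
  have h0 : c 0 ≠ 0 := by rintro h; simp [hIc, h] at hI
  have h7 : c 7 ≠ 0 := by rintro h; simp [hIc, h] at hI
  have h5 : c 5 ≠ 0 := by rintro h; simp [hIc, h] at hI
  have h9 : c 9 ≠ 0 := by rintro h; simp [hIc, h] at hI
  obtain ⟨w, hw⟩ := IsAlgClosed.exists_pow_nat_eq (c 5 * c 0) (n := 2) two_pos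
  have hw0 : w ≠ 0 := by
    rintro rfl
    exact mul_ne_zero h5 h0 (by rw [← hw]; ring)
  set ξ : L := c 7 * c 9 * w with hξ
  have hξ0 : ξ ≠ 0 := by simp [hξ, h7, h9, hw0]
  obtain ⟨η, hη⟩ := IsAlgClosed.exists_pow_nat_eq (c 7 / (c 0 * ξ ^ 2)) (n := 2) two_pos
  have hη0 : η ≠ 0 := by
    rintro rfl
    exact div_ne_zero h7 (mul_ne_zero h0 (pow_ne_zero 2 hξ0)) (by rw [← hη]; ring)
  have hξη : c 0 * ξ ^ 2 * η ^ 2 = c 7 := by rw [hη]; field_simp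
  have hξ2 : ξ ^ 2 = c 7 ^ 2 * c 9 ^ 2 * (c 5 * c 0) := by rw [hξ, ← hw]; ring
  let g : G6 L := (diagSL (Units.mk0 ξ hξ0), diagSL (Units.mk0 η hη0),
    Units.mk0 (c 7 / ξ) (div_ne_zero h7 hξ0), Units.mk0 (c 9 / η) (div_ne_zero h9 hη0))
  have e0 : coordAct g c 0 = 1 := by
    simp [g, coordAct, quadSub, diagSL]
    field_simp
    linear_combination hξη
  have e1 : coordAct g c 1 = 0 := by simp [g, coordAct, quadSub, diagSL, h1]
  have e3 : coordAct g c 3 = 0 := by simp [g, coordAct, quadSub, diagSL, h3]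
  have e4 : coordAct g c 4 = 0 := by simp [g, coordAct, quadSub, diagSL, h4]
  have e5 : coordAct g c 5 = 1 := by
    simp [g, coordAct, quadSub, diagSL]
    field_simp
    apply mul_left_cancel₀ h0
    linear_combination (-ξ ^ 2) * hξη - c 7 * hξ2
  have e7 : coordAct g c 7 = 1 := by
    simp [g, coordAct, quadSub, diagSL]
    field_simp
  have e8 : coordAct g c 8 = 0 := by simp [g, coordAct, quadSub, diagSL, h8]
  have e9 : coordAct g c 9 = 1 := by
    simp [g, coordAct, quadSub, diagSL]
    field_simp
  have e2 : coordAct g c 2 = resInv c := by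
    rw [← resInv_coordAct g c]
    simp only [resInv, pencilRes, linRes, valueX, valueY, e0, e1, e3, e4, e5, e7, e8, e9]
    ring
  have e6 : coordAct g c 6 = -polarInv c := by
    rw [← polarInv_coordAct g c]
    simp only [polarInv, pencilDisc0, pencilDisc1, pencilDisc2, valueX, valueY,
      e0, e1, e3, e4, e5, e7, e8, e9]
    ring
  refine ⟨g, ?_⟩
  funext i
  fin_cases i <;>
    simp only [normalForm6, Matrix.cons_val, Fin.reduceFinMk, Fin.zero_eta, Fin.mk_one]
  · exact e0
  · exact e1
  · exact e2
  · exact e3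
  · exact e4
  · exact e5
  · exact e6
  · exact e7
  · exact e8
  · exact e9

lemma hasNormalForm_of_ne_zero (hI : resInv c ≠ 0) (hE : polarInv c ^ 2 - 4 * resInv c ≠ 0) :
    HasNormalForm c := by
  obtain ⟨M, hM⟩ := exists_sl_mul_col_zero (c 4) (c 5)
  obtain ⟨N, hN⟩ := exists_sl_mul_col_zero (c 8) (c 9)
  apply HasNormalForm.of_coordAct (M, N, 1, 1)
  rw [← polarInv_coordAct (M, N, 1, 1) c] at hE
  rw [← resInv_coordAct (M, N, 1, 1) c] at hE hI
  have h4 : coordAct (M, N, 1, 1) c 4 = 0 := by simpa [coordAct] using hM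
  have h8 : coordAct (M, N, 1, 1) c 8 = 0 := by simpa [coordAct] using hN
  generalize coordAct (M, N, 1, 1) c = c at *
  have h0 : c 0 ≠ 0 := by
    rintro h
    simp [resInv, linRes, valueX, h4, h8, h] at hI
  apply HasNormalForm.of_coordAct (unipSL (-c 1 / c 0), 1, 1, 1)
  rw [← polarInv_coordAct (unipSL (-c 1 / c 0), 1, 1, 1) c] at hE
  rw [← resInv_coordAct (unipSL (-c 1 / c 0), 1, 1, 1) c] at hE hI
  have k4 : coordAct (unipSL (-c 1 / c 0), 1, 1, 1) c 4 = 0 := by simp [coordAct, unipSL, h4]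
  have k8 : coordAct (unipSL (-c 1 / c 0), 1, 1, 1) c 8 = 0 := by simp [coordAct, unipSL, h8]
  have k1 : coordAct (unipSL (-c 1 / c 0), 1, 1, 1) c 1 = 0 := by
    simp [coordAct, unipSL, quadSub, h0]
  clear h4 h8 h0 hM hN
  generalize coordAct (unipSL (-c 1 / c 0), 1, 1, 1) c = c at *
  have h7 : c 7 ≠ 0 := by
    rintro h
    rw [← discAtLin_mul_discAtValue] at hE
    simp [discAtValue, pencilDisc2, valueY, k1, k8, h] at hE
  apply HasNormalForm.of_coordAct (1, unipSL (-c 3 / c 7), 1, 1)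
  apply hasNormalForm_of_monomial
  · rwa [resInv_coordAct]
  · simp [coordAct, k4]
  · simp [coordAct, unipSL, k8]
  · simp [coordAct, unipSL, quadSub, k1]
  · simp [coordAct, unipSL, quadSub, k1]
    field_simp
    ring

end NormalForm

section Stability

variable {L : Type*} [Field L] [IsAlgClosed L] {c : Fin 10 → L}

lemma Stable6.c5_ne_zero (h : Stable6 c) (h4 : c 4 = 0) : c 5 ≠ 0 := by
  intro h5
  refine h.false_of_weight6 0 0 (-1) (-1) (by simp) fun i => ?_
  fin_cases i <;> simp [weight6, h4, h5]

lemma Stable6.c9_ne_zero (h : Stable6 c) (h8 : c 8 = 0) : c 9 ≠ 0 := by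
  intro h9
  refine h.false_of_weight6 0 0 0 1 (by simp) fun i => ?_
  fin_cases i <;> simp [weight6, h8, h9]

lemma Stable6.c1_ne_zero (h : Stable6 c) (h0 : c 0 = 0) : c 1 ≠ 0 := by
  intro h1
  obtain ⟨M, hM⟩ := exists_sl_mul_col_one (c 6) (c 7)
  have k0 : coordAct (M, 1, 1, 1) c 0 = 0 := by simp [coordAct, quadSub, h0, h1]
  have k1 : coordAct (M, 1, 1, 1) c 1 = 0 := by simp [coordAct, quadSub, h0, h1]
  have k7 : coordAct (M, 1, 1, 1) c 7 = 0 := by simpa [coordAct, quadSub] using hM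
  refine (h.act (M, 1, 1, 1)).false_of_weight6 1 (-1) 1 (-1) (by simp) fun i => ?_
  fin_cases i <;> simp [weight6, k0, k1, k7]

lemma Stable6.c6_ne_zero (h : Stable6 c) (h4 : c 4 = 0) (h0 : c 0 = 0) : c 6 ≠ 0 := by
  intro h6
  refine h.false_of_weight6 (-2) (-1) 0 (-1) (by simp) fun i => ?_
  fin_cases i <;> simp [weight6, h4, h0, h6]

lemma Stable6.c0_ne_zero (h : Stable6 c) (h4 : c 4 = 0) (h8 : c 8 = 0) : c 0 ≠ 0 := by
  intro h0
  refine h.false_of_weight6 (-1) (-1) (-1) 1 (by simp) fun i => ?_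
  fin_cases i <;> simp [weight6, h4, h0, h8]

lemma Stable6.c7_ne_zero (h : Stable6 c) (h1 : c 1 = 0) (h8 : c 8 = 0) : c 7 ≠ 0 := by
  intro h7
  refine h.false_of_weight6 2 (-1) 0 1 (by simp) fun i => ?_
  fin_cases i <;> simp [weight6, h1, h7, h8]

/-- Two binary quadratic forms with vanishing resultant have a common root. -/
lemma exists_coordAct_of_pencilRes_eq_zero (h : pencilRes c = 0) :
    ∃ g : G6 L, coordAct g c 0 = 0 ∧ coordAct g c 1 = 0 := by
  obtain ⟨N, hN⟩ := exists_sl_root (c 0) (c 6) (c 2)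
  have hR : pencilRes (coordAct (1, N, 1, 1) c) = 0 := by rw [pencilRes_coordAct, h, mul_zero]
  have h0 : coordAct (1, N, 1, 1) c 0 = 0 := by simpa [coordAct, quadSub] using hN
  suffices ∃ g : G6 L, coordAct g (coordAct (1, N, 1, 1) c) 0 = 0 ∧
      coordAct g (coordAct (1, N, 1, 1) c) 1 = 0 by
    obtain ⟨g, hg⟩ := this
    rw [coordAct_coordAct] at hg
    exact ⟨_, hg⟩
  generalize coordAct (1, N, 1, 1) c = c at *
  clear hN h
  by_cases h1 : c 1 = 0
  · exact ⟨1, by rw [coordAct_one]; exact ⟨h0, h1⟩⟩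
  have hroot : c 1 * c 2 ^ 2 - c 7 * (c 2 * c 6) + c 3 * c 6 ^ 2 = 0 := by
    apply mul_left_cancel₀ h1
    simp only [pencilRes, h0] at hR
    linear_combination hR
  by_cases hd : c 2 ≠ 0 ∨ -c 6 ≠ 0
  · obtain ⟨K, hK0, hK1⟩ := exists_sl_col_zero hd
    refine ⟨(1, K, 1, 1), ?_, ?_⟩
    · simp [coordAct, quadSub, h0, hK0, hK1]
      ring
    · simp [coordAct, quadSub, hK0, hK1]
      linear_combination hroot
  · push Not at hd
    have h6 : c 6 = 0 := neg_eq_zero.mp hd.2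
    obtain ⟨K, hK⟩ := exists_sl_root (c 1) (c 7) (c 3)
    exact ⟨(1, K, 1, 1), by simp [coordAct, quadSub, h0, h6, hd.1],
      by simpa [coordAct, quadSub] using hK⟩

lemma Stable6.pencilRes_ne_zero (h : Stable6 c) : pencilRes c ≠ 0 := by
  intro hR
  obtain ⟨g, h0, h1⟩ := exists_coordAct_of_pencilRes_eq_zero hR
  exact (h.act g).c1_ne_zero h0 h1

lemma Stable6.linRes_ne_zero (h : Stable6 c) : linRes c ≠ 0 := by
  obtain ⟨M, hM⟩ := exists_sl_mul_col_zero (c 4) (c 5)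
  obtain ⟨N, hN⟩ := exists_sl_mul_col_zero (c 8) (c 9)
  have h4 : coordAct (M, N, 1, 1) c 4 = 0 := by simpa [coordAct] using hM
  have h8 : coordAct (M, N, 1, 1) c 8 = 0 := by simpa [coordAct] using hN
  have h' := h.act (M, N, 1, 1)
  intro hA
  have hA' := linRes_coordAct (M, N, 1, 1) c
  rw [hA] at hA'
  simp [linRes, valueX, h4, h8, h'.c5_ne_zero h4, h'.c9_ne_zero h8, h'.c0_ne_zero h4 h8] at hA'

lemma Stable6.pencilDisc0_ne_zero (h : Stable6 c) (h4 : c 4 = 0) : pencilDisc0 c ≠ 0 := by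
  obtain ⟨N, hN⟩ := exists_sl_root (c 0) (c 6) (c 2)
  have k0 : coordAct (1, N, 1, 1) c 0 = 0 := by simpa [coordAct, quadSub] using hN
  have k4 : coordAct (1, N, 1, 1) c 4 = 0 := by simpa [coordAct] using h4
  have k6 := (h.act (1, N, 1, 1)).c6_ne_zero k4 k0
  intro hD
  have hD' := pencilDisc0_coordAct (1, N, 1, 1) c
  rw [pencilDisc0, k0, hD] at hD'
  exact k6 (by simpa using hD')

lemma Stable6.discAtLin_ne_zero (h : Stable6 c) : discAtLin c ≠ 0 := by
  obtain ⟨M, hM⟩ := exists_sl_mul_col_zero (c 4) (c 5)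
  have k4 : coordAct (M, 1, 1, 1) c 4 = 0 := by simpa [coordAct] using hM
  have k := h.act (M, 1, 1, 1)
  have k5 := k.c5_ne_zero k4
  have kD := k.pencilDisc0_ne_zero k4
  intro hB
  have hB' := discAtLin_coordAct (M, 1, 1, 1) c
  rw [discAtLin, k4, hB] at hB'
  exact mul_ne_zero kD (pow_ne_zero 2 k5) (by linear_combination hB')

lemma Stable6.discAtValue_ne_zero_of_c8 (h : Stable6 c) (h8 : c 8 = 0) : discAtValue c ≠ 0 := by
  obtain ⟨M, hM⟩ := exists_sl_mul_col_one (c 0) (c 1)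
  have k1 : coordAct (M, 1, 1, 1) c 1 = 0 := by simpa [coordAct, quadSub] using hM
  have k8 : coordAct (M, 1, 1, 1) c 8 = 0 := by simpa [coordAct] using h8
  have k := h.act (M, 1, 1, 1)
  have k0 : coordAct (M, 1, 1, 1) c 0 ≠ 0 := fun hk => k.c1_ne_zero hk k1
  have k7 := k.c7_ne_zero k1 k8
  have k9 := k.c9_ne_zero k8
  intro hC
  have hC' := discAtValue_coordAct (M, 1, 1, 1) c
  rw [discAtValue, pencilDisc2, valueX, valueY, k1, k8, hC] at hC'
  exact mul_ne_zero (pow_ne_zero 2 k7) (pow_ne_zero 2 (mul_ne_zero k0 (pow_ne_zero 2 k9)))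
    (by linear_combination -hC')

lemma Stable6.discAtValue_ne_zero (h : Stable6 c) : discAtValue c ≠ 0 := by
  obtain ⟨N, hN⟩ := exists_sl_mul_col_zero (c 8) (c 9)
  have k8 : coordAct (1, N, 1, 1) c 8 = 0 := by simpa [coordAct] using hN
  intro hC
  exact (h.act (1, N, 1, 1)).discAtValue_ne_zero_of_c8 k8
    (by rw [discAtValue_coordAct, hC, mul_zero])

lemma stable6_of_ne_zero (hI : resInv c ≠ 0) (hE : polarInv c ^ 2 - 4 * resInv c ≠ 0) :
    Stable6 c := by
  rw [stable6_iff]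
  obtain ⟨g, hg⟩ := hasNormalForm_of_ne_zero hI hE
  constructor
  · refine ⟨{resInv MvPolynomial.X - MvPolynomial.C (resInv c),
      polarInv MvPolynomial.X - MvPolynomial.C (polarInv c)}, ?_⟩
    ext c'
    simp only [Set.mem_ofPred_eq, Set.mem_insert_iff, Set.mem_singleton_iff, forall_eq_or_imp,
      forall_eq, map_sub, map_resInv, map_polarInv, MvPolynomial.eval_X, MvPolynomial.eval_C,
      sub_eq_zero]
    constructor
    · rintro ⟨k, rfl⟩
      exact ⟨resInv_coordAct k c, polarInv_coordAct k c⟩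
    · rintro ⟨hI', hE'⟩
      obtain ⟨k, hk⟩ := hasNormalForm_of_ne_zero (c := c') (by rwa [hI']) (by rwa [hI', hE'])
      refine ⟨g * k⁻¹, ?_⟩
      rw [← coordAct_coordAct, hg, ← hI', ← hE', ← hk, coordAct_inv_coordAct]
  · have := finite_stabilizer_coordAct (g := g⁻¹)
      (finite_stabilizer_normalForm6 (polarInv c) (resInv c))
    rwa [← hg, coordAct_inv_coordAct] at this

end Stability

/-
STATEMENT 14 (Theorem 5.6): a vector v ∈ V₆ is stable for the action of
G₆ = SL₂(L) × SL₂(L) × Lˣ × Lˣ if and only if Δ₆(v) ≠ 0.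
-/
theorem stable6_iff_Delta6_ne_zero
    {L : Type*} [Field L] [IsAlgClosed L]
    (Q : MvPolynomial (Fin 10) ℤ)
    (hQ : 16 * Q =
      disc4 (beta1 * beta5) (beta1 * beta6 + beta2 * beta5) (beta2 * beta6 + beta3 * beta5)
        (beta3 * beta6 + beta4 * beta5) (beta4 * beta6))
    (c : Fin 10 → L) :
    Stable6 c ↔ Delta6 Q c ≠ 0 := by
  have hΔ : Delta6 Q c = resInv c * (polarInv c ^ 2 - 4 * resInv c) ^ 2 := by
    have hmap := map_resInv (MvPolynomial.aeval c : MvPolynomial (Fin 10) ℤ →ₐ[ℤ] L).toRingHom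
      MvPolynomial.X
    have hmap' := map_polarInv (MvPolynomial.aeval c : MvPolynomial (Fin 10) ℤ →ₐ[ℤ] L).toRingHom
      MvPolynomial.X
    simp only [AlgHom.toRingHom_eq_coe, RingHom.coe_coe, MvPolynomial.aeval_X] at hmap hmap'
    rw [Delta6, eq_of_sixteen_mul_eq_disc4 Q hQ]
    simp only [map_mul, map_pow, map_sub, map_ofNat, hmap, hmap']
  rw [hΔ]
  constructor
  · intro h
    refine mul_ne_zero (mul_ne_zero h.pencilRes_ne_zero (pow_ne_zero 2 h.linRes_ne_zero))
      (pow_ne_zero 2 ?_)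
    rw [← discAtLin_mul_discAtValue]
    exact mul_ne_zero h.discAtLin_ne_zero h.discAtValue_ne_zero
  · intro h
    exact stable6_of_ne_zero (left_ne_zero_of_mul h) fun hE => h (by rw [hE]; ring)
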